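/- arXiv:1501.02012 — 3 statements merged into one kernel-verified Lean document; each statement's English description precedes it below -/
import Mathlib

section
/- Fix d ≥ 1, a real number ρ > 0, a d×d real matrix F, and a vector a ∈ ℝ^d. Let b* = ρ(I_d + ρFFᵀ)⁻¹Fa. Then I_d + ρFᵀF is invertible and ρ‖Fᵀb* − a‖² + ‖b*‖² = ρ · aᵀ(I_d + ρFᵀF)⁻¹a. -/
open Matrix Finset

/-- A regularized Gram matrix is invertible. -/
lemma isUnit_one_add_smul_transpose_mul_self {m n : Type*} [Fintype m] [Fintype n]
    [DecidableEq n] (A : Matrix m n ℝ) {ρ : ℝ} (hρ : 0 ≤ ρ) :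
    IsUnit (1 + ρ • (Aᵀ * A)) := by
  have hA : (Aᵀ * A).PosSemidef := by
    simpa only [conjTranspose_eq_transpose_of_trivial] using posSemidef_conjTranspose_mul_self A
  exact (PosDef.one.add_posSemidef (hA.smul hρ)).isUnit

/-- The push-through identity, applied to a vector. -/
lemma inv_one_add_smul_mul_transpose_mulVec {m n : Type*} [Fintype m] [Fintype n]
    [DecidableEq m] [DecidableEq n] (A : Matrix m n ℝ) {ρ : ℝ} (hρ : 0 ≤ ρ) (a : n → ℝ) :
    (1 + ρ • (A * Aᵀ))⁻¹ *ᵥ (A *ᵥ a) = A *ᵥ ((1 + ρ • (Aᵀ * A))⁻¹ *ᵥ a) := by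
  have hM := (isUnit_iff_isUnit_det _).mp (isUnit_one_add_smul_transpose_mul_self A hρ)
  have hN := (isUnit_iff_isUnit_det _).mp (isUnit_one_add_smul_transpose_mul_self Aᵀ hρ)
  rw [transpose_transpose] at hN
  have hcomm : A * (1 + ρ • (Aᵀ * A)) = (1 + ρ • (A * Aᵀ)) * A := by
    simp [Matrix.mul_add, Matrix.add_mul, Matrix.mul_assoc]
  rw [mulVec_mulVec, mulVec_mulVec]
  congr 1
  calc (1 + ρ • (A * Aᵀ))⁻¹ * A
      = (1 + ρ • (A * Aᵀ))⁻¹ * (A * (1 + ρ • (Aᵀ * A)) * (1 + ρ • (Aᵀ * A))⁻¹) := by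
        rw [mul_nonsing_inv_cancel_right _ _ hM]
    _ = A * (1 + ρ • (Aᵀ * A))⁻¹ := by
        rw [hcomm, Matrix.mul_assoc, nonsing_inv_mul_cancel_left _ _ hN]

/-- The minimal effective-noise energy of the integer-forcing receiver: with
`b* = ρ (I + ρ F Fᵀ)⁻¹ F a`, the matrix `I + ρ Fᵀ F` is invertible and
`ρ‖Fᵀb* - a‖² + ‖b*‖² = ρ · aᵀ (I + ρ Fᵀ F)⁻¹ a`. -/
theorem IF_effective_noise_energy (d : ℕ) (hd : 1 ≤ d) (ρ : ℝ) (hρ : 0 < ρ)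
    (F : Matrix (Fin d) (Fin d) ℝ) (a : Fin d → ℝ)
    (bstar : Fin d → ℝ)
    (hbstar : bstar = ρ • ((1 + ρ • (F * Fᵀ))⁻¹.mulVec (F.mulVec a))) :
    IsUnit (1 + ρ • (Fᵀ * F)) ∧
      ρ * ∑ i, ((Fᵀ.mulVec bstar - a) i) ^ 2 + ∑ i, (bstar i) ^ 2
        = ρ * (a ⬝ᵥ (1 + ρ • (Fᵀ * F))⁻¹.mulVec a) := by
  have hM := isUnit_one_add_smul_transpose_mul_self F hρ.le
  refine ⟨hM, ?_⟩
  rw [inv_one_add_smul_mul_transpose_mulVec F hρ.le] at hbstar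
  set c := (1 + ρ • (Fᵀ * F))⁻¹ *ᵥ a with hc
  have ha : a = c + ρ • (Fᵀ *ᵥ (F *ᵥ c)) := by
    have h : (1 + ρ • (Fᵀ * F)) *ᵥ c = a := by
      rw [hc, mulVec_mulVec, mul_nonsing_inv _ ((isUnit_iff_isUnit_det _).mp hM), one_mulVec]
    rw [mulVec_mulVec, ← smul_mulVec]
    nth_rewrite 1 [← h]
    rw [add_mulVec, one_mulVec]
  have hres : Fᵀ *ᵥ bstar - a = -c := by
    rw [hbstar, mulVec_smul]
    nth_rewrite 1 [ha]
    abel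
  have hsq (v : Fin d → ℝ) : ∑ i, v i ^ 2 = v ⬝ᵥ v := by
    simp only [dotProduct, sq]
  have hgram : (Fᵀ *ᵥ (F *ᵥ c)) ⬝ᵥ c = (F *ᵥ c) ⬝ᵥ (F *ᵥ c) := by
    rw [mulVec_transpose, ← dotProduct_mulVec]
  have hac : a ⬝ᵥ c = c ⬝ᵥ c + ρ * ((F *ᵥ c) ⬝ᵥ (F *ᵥ c)) := by
    nth_rewrite 1 [ha]
    rw [add_dotProduct, smul_dotProduct, hgram, smul_eq_mul]
  rw [hres, hsq, hsq, hac, hbstar]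
  simp only [neg_dotProduct_neg, smul_dotProduct, dotProduct_smul, smul_eq_mul]
  ring
end

section
/- Fix d ≥ 1 and ρ > 0. Let Σ be a d×d real diagonal matrix with positive diagonal entries σ₁, …, σ_d, let L be an invertible d×d real matrix with LLᵀ = (I_d + ρΣᵀΣ)⁻¹, let P be a d×d real orthogonal matrix with d_p(P) = inf over nonzero u ∈ ℤ^d of ∏_{m=1}^{d} |(Pu)_m| satisfying d_p(P) > 0, and set L_p = PᵀL. Then for every nonzero v ∈ ℤ^d, ‖L_p⁻¹v‖² ≥ d · ρ · (∏_{m=1}^{d} σ_m²)^{1/d} · d_p(P)^{2/d}; in particular the squared minimum distance of the lattice {L_p⁻¹v : v ∈ ℤ^d} grows at least linearly in ρ. -/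
open Matrix Finset

/-- The inequality of arithmetic and geometric means, with the cardinality cleared. -/
theorem card_mul_prod_rpow_le_sum {d : ℕ} (hd : 1 ≤ d) (x : Fin d → ℝ) (hx : ∀ i, 0 ≤ x i) :
    d * (∏ i, x i) ^ ((1 : ℝ) / d) ≤ ∑ i, x i := by
  have hd0 : (0 : ℝ) < d := by exact_mod_cast hd
  have h := Real.geom_mean_le_arith_mean univ (fun _ => (1 : ℝ)) x (fun _ _ => zero_le_one)
    (by simpa using hd0) (fun i _ => hx i)
  simp only [Real.rpow_one, sum_const, card_univ, Fintype.card_fin, nsmul_eq_mul, mul_one,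
    one_mul, le_div_iff₀ hd0] at h
  rw [one_div, mul_comm]
  exact h

/-- If `L Lᵀ = (diagonal a)⁻¹`, then `‖L⁻¹ w‖²` is the quadratic form of `diagonal a`. -/
theorem sum_sq_inv_mulVec_eq {n : Type*} [Fintype n] [DecidableEq n] (L : Matrix n n ℝ)
    (a : n → ℝ) (ha : ∀ i, a i ≠ 0) (hL : L * Lᵀ = (diagonal a)⁻¹) (w : n → ℝ) :
    ∑ i, (L⁻¹ *ᵥ w) i ^ 2 = ∑ i, a i * w i ^ 2 := by
  have hdet : IsUnit (diagonal a).det := by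
    rw [det_diagonal, isUnit_iff_ne_zero]
    exact prod_ne_zero_iff.mpr fun i _ => ha i
  have hinv : (L⁻¹)ᵀ * L⁻¹ = diagonal a := by
    rw [transpose_nonsing_inv, ← Matrix.mul_inv_rev, hL, nonsing_inv_nonsing_inv _ hdet]
  calc ∑ i, (L⁻¹ *ᵥ w) i ^ 2 = (L⁻¹ *ᵥ w) ⬝ᵥ (L⁻¹ *ᵥ w) := by simp [dotProduct, sq]
    _ = w ⬝ᵥ (((L⁻¹)ᵀ * L⁻¹) *ᵥ w) := by
      rw [← mulVec_mulVec, dotProduct_mulVec w, vecMul_transpose]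
    _ = ∑ i, a i * w i ^ 2 := by
      rw [hinv]
      simp only [dotProduct, mulVec_diagonal]
      exact sum_congr rfl fun i _ => by ring

/-- Deterministic core of full diversity for Type II UPIF: with `Σ = diagonal σ` (positive
`σ_m`), `L` invertible with `L Lᵀ = (I + ρ Σᵀ Σ)⁻¹`, `P` orthogonal with positive minimum
product distance `d_p(P)`, and `L_p = Pᵀ L`, every nonzero integer vector `v` satisfies
`‖L_p⁻¹ v‖² ≥ d · ρ · (∏_m σ_m²)^(1/d) · d_p(P)^(2/d)`. -/
theorem typeII_UPIF_full_diversity_core (d : ℕ) (hd : 1 ≤ d) (ρ : ℝ) (hρ : 0 < ρ)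
    (σ : Fin d → ℝ) (hσ : ∀ m, 0 < σ m)
    (L : Matrix (Fin d) (Fin d) ℝ) (hL : IsUnit L)
    (hLLt : L * Lᵀ = (1 + ρ • ((Matrix.diagonal σ)ᵀ * Matrix.diagonal σ))⁻¹)
    (P : Matrix (Fin d) (Fin d) ℝ) (hP : Pᵀ * P = 1)
    (dp : ℝ)
    (hdp : dp = sInf {x : ℝ | ∃ u : Fin d → ℤ, u ≠ 0 ∧
      x = ∏ m, |P.mulVec (fun i => (u i : ℝ)) m|})
    (hdp_pos : 0 < dp)
    (Lp : Matrix (Fin d) (Fin d) ℝ) (hLp : Lp = Pᵀ * L) :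
    ∀ v : Fin d → ℤ, v ≠ 0 →
      ∑ i, (Lp⁻¹.mulVec (fun i => (v i : ℝ)) i) ^ 2 ≥
        d * ρ * (∏ m, (σ m) ^ 2) ^ ((1 : ℝ) / d) * dp ^ ((2 : ℝ) / d) := by
  intro v hv
  set w : Fin d → ℝ := P *ᵥ fun i => (v i : ℝ)
  have hdp_le : dp ≤ ∏ m, |w m| := by
    rw [hdp]
    refine csInf_le ⟨0, ?_⟩ ⟨v, hv, rfl⟩
    rintro x ⟨u, -, rfl⟩
    positivity
  have hdiag : 1 + ρ • ((diagonal σ)ᵀ * diagonal σ) = diagonal fun m => 1 + ρ * σ m ^ 2 := by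
    rw [diagonal_transpose, diagonal_mul_diagonal, ← diagonal_one, ← diagonal_smul, diagonal_add]
    congr 1
    ext m
    simp [sq]
  have hmulVec : Lp⁻¹ *ᵥ (fun i => (v i : ℝ)) = L⁻¹ *ᵥ w := by
    rw [hLp, Matrix.mul_inv_rev, inv_eq_right_inv hP, ← mulVec_mulVec]
  have hdp_rpow : dp ^ ((2 : ℝ) / d) ≤ (∏ m, w m ^ 2) ^ ((1 : ℝ) / d) := by
    have hsq : dp ^ 2 ≤ ∏ m, w m ^ 2 := by
      calc dp ^ 2 ≤ (∏ m, |w m|) ^ 2 := by gcongr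
        _ = ∏ m, w m ^ 2 := by simp [← prod_pow]
    calc dp ^ ((2 : ℝ) / d) = (dp ^ 2) ^ ((1 : ℝ) / d) := by
          rw [← Real.rpow_natCast, ← Real.rpow_mul hdp_pos.le]
          congr 1
          push_cast
          ring
      _ ≤ _ := by gcongr
  rw [hmulVec, sum_sq_inv_mulVec_eq L _ (fun m => by positivity) (hdiag ▸ hLLt), ge_iff_le]
  calc d * ρ * (∏ m, σ m ^ 2) ^ ((1 : ℝ) / d) * dp ^ ((2 : ℝ) / d)
      ≤ d * ρ * (∏ m, σ m ^ 2) ^ ((1 : ℝ) / d) * (∏ m, w m ^ 2) ^ ((1 : ℝ) / d) := by gcongr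
    _ = ρ * (d * (∏ m, σ m ^ 2 * w m ^ 2) ^ ((1 : ℝ) / d)) := by
      rw [prod_mul_distrib, Real.mul_rpow (by positivity) (by positivity)]
      ring
    _ ≤ ρ * ∑ m, σ m ^ 2 * w m ^ 2 := by
      gcongr
      exact card_mul_prod_rpow_le_sum hd _ fun m => by positivity
    _ ≤ ∑ m, (1 + ρ * σ m ^ 2) * w m ^ 2 := by
      rw [mul_sum]
      refine sum_le_sum fun m _ => ?_
      nlinarith [sq_nonneg (w m)]
end

section
/- Let α be a nonnegative real random variable on a probability space, and let q ≥ 0 and δ > 0 be real numbers such that P(α ≤ x) ≤ q·x^δ for every x ≥ 0. Then for every s > 0, E[exp(−sα)] ≤ q·Γ(δ+1)·s^{−δ}, where Γ denotes the Gamma function. -/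
open MeasureTheory ProbabilityTheory

/-- An exponential is the integral of its tail density. -/
lemma lintegral_Ioi_mul_exp_neg {s : ℝ} (hs : 0 < s) (a : ℝ) :
    ∫⁻ x in Set.Ioi a, ENNReal.ofReal (s * Real.exp (-s * x)) =
      ENNReal.ofReal (Real.exp (-s * a)) := by
  have hint : IntegrableOn (fun x => s * Real.exp (-s * x)) (Set.Ioi a) :=
    (integrableOn_exp_mul_Ioi (neg_lt_zero.mpr hs) a).const_mul s
  rw [← ofReal_integral_eq_lintegral_ofReal hint (ae_of_all _ fun x => by positivity),
    integral_const_mul, integral_exp_mul_Ioi (neg_lt_zero.mpr hs)]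
  congr 1
  field_simp

/-- The Laplace transform of a nonnegative random variable in terms of its lower tail. -/
lemma lintegral_exp_neg_mul_eq_lintegral_meas_lt {Ω : Type*} [MeasurableSpace Ω]
    (μ : Measure Ω) [SFinite μ] {X : Ω → ℝ} (hX : Measurable X) (hX0 : ∀ ω, 0 ≤ X ω)
    {s : ℝ} (hs : 0 < s) :
    ∫⁻ ω, ENNReal.ofReal (Real.exp (-s * X ω)) ∂μ =
      ∫⁻ x in Set.Ioi 0, ENNReal.ofReal (s * Real.exp (-s * x)) * μ {ω | X ω < x} := by
  let F : Ω → ℝ → ENNReal := fun ω x =>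
    {p : Ω × ℝ | X p.1 < p.2}.indicator
      (fun p => ENNReal.ofReal (s * Real.exp (-s * p.2))) (ω, x)
  have hF : Measurable (Function.uncurry F) :=
    Measurable.indicator (by fun_prop)
      (measurableSet_lt (hX.comp measurable_fst) measurable_snd)
  calc
    _ = ∫⁻ ω, (∫⁻ x in Set.Ioi 0, F ω x) ∂μ := by
      refine lintegral_congr fun ω => ?_
      rw [← lintegral_Ioi_mul_exp_neg hs,
        ← Set.inter_eq_left.mpr (Set.Ioi_subset_Ioi (hX0 ω)),
        ← setLIntegral_indicator measurableSet_Ioi]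
      rfl
    _ = ∫⁻ x in Set.Ioi 0, ∫⁻ ω, F ω x ∂μ := lintegral_lintegral_swap hF.aemeasurable
    _ = _ := lintegral_congr fun x =>
      lintegral_indicator_const (s := {ω | X ω < x}) (measurableSet_lt hX measurable_const)
        (ENNReal.ofReal (s * Real.exp (-s * x)))

/-- Converting a polynomial lower-tail bound into polynomial decay of the Laplace transform:
if `α ≥ 0` satisfies `P(α ≤ x) ≤ q x^δ` for all `x ≥ 0`, then for every `s > 0`,
`E[exp (-s α)] ≤ q Γ(δ + 1) s^(-δ)`. -/
theorem tail_bound_to_laplace_decay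
    {Ω : Type*} [MeasureSpace Ω] [IsProbabilityMeasure (ℙ : Measure Ω)]
    (α : Ω → ℝ) (hαmeas : Measurable α) (hαnonneg : ∀ ω, 0 ≤ α ω)
    (q δ : ℝ) (hq : 0 ≤ q) (hδ : 0 < δ)
    (htail : ∀ x : ℝ, 0 ≤ x → (ℙ {ω | α ω ≤ x}).toReal ≤ q * x ^ δ) :
    ∀ s : ℝ, 0 < s →
      (∫ ω, Real.exp (-s * α ω) ∂ℙ) ≤ q * Real.Gamma (δ + 1) * s ^ (-δ) := by
  intro s hs
  have hΓ : 0 < Real.Gamma (δ + 1) := Real.Gamma_pos_of_pos (by linarith)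
  have hint : IntegrableOn (fun x : ℝ => s * q * (x ^ δ * Real.exp (-s * x))) (Set.Ioi 0) := by
    have h := integrableOn_rpow_mul_exp_neg_mul_rpow (by linarith : -1 < δ) one_pos hs
    simp only [Real.rpow_one] at h
    exact h.const_mul (s * q)
  have hval : ∫ x in Set.Ioi 0, s * q * (x ^ δ * Real.exp (-s * x)) =
      q * Real.Gamma (δ + 1) * s ^ (-δ) := by
    have h := Real.integral_rpow_mul_exp_neg_mul_Ioi (by linarith : 0 < δ + 1) hs
    simp only [add_sub_cancel_right, ← neg_mul] at h
    rw [integral_const_mul, h, one_div, Real.inv_rpow hs.le, Real.rpow_add hs, Real.rpow_one,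
      Real.rpow_neg hs.le]
    field_simp
  rw [integral_eq_lintegral_of_nonneg_ae (ae_of_all _ fun ω => (Real.exp_pos _).le)
    (by fun_prop)]
  refine ENNReal.toReal_le_of_le_ofReal (by positivity) ?_
  rw [lintegral_exp_neg_mul_eq_lintegral_meas_lt ℙ hαmeas hαnonneg hs, ← hval,
    ofReal_integral_eq_lintegral_ofReal hint]
  · refine setLIntegral_mono' measurableSet_Ioi fun x (hx : 0 < x) => ?_
    have hmeas : ℙ {ω | α ω < x} ≤ ENNReal.ofReal (q * x ^ δ) :=
      (measure_mono fun ω (h : α ω < x) => h.le).trans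
        ((ENNReal.le_ofReal_iff_toReal_le (measure_ne_top _ _) (by positivity)).mpr
          (htail x hx.le))
    calc
      _ ≤ ENNReal.ofReal (s * Real.exp (-s * x)) * ENNReal.ofReal (q * x ^ δ) := by gcongr
      _ = _ := by
        rw [← ENNReal.ofReal_mul (by positivity)]
        congr 1
        ring
  · filter_upwards [ae_restrict_mem measurableSet_Ioi] with x (hx : 0 < x)
    simp only [Pi.zero_apply]
    positivity
end
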